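/- Let p be a prime, f ≥ 1 an integer, q = p^f, and let K = F_q((t)) be the field of formal Laurent series over the field F_q with q elements. Fix a separable closure Ω of K. For an integer n ≥ 1 set e_n = p^n − 1, let K_n = K(ζ) where ζ ∈ Ω is a primitive e_n-th root of unity, let L_n ⊆ Ω be the field generated over K_n by all x ∈ Ω with x^{e_n} ∈ K_n, and let G_n = Gal(L_n / K). Let ℘ : L_n → L_n be the additive map ℘(x) = x^p − x. Then there is an isomorphism of F_p[G_n]-modules between the quotient L_n / ℘(L_n) of the additive group of L_n (with the G_n-action induced by the Galois action) and the direct sum F_p ⊕ F_p[G_n]^{(ℕ)}, where G_n acts trivially on F_p and F_p[G_n]^{(ℕ)} is a countable direct sum of copies of the group algebra F_p[G_n] with G_n acting by left multiplication. -/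

import Mathlib

/-!
Write `E = F((s))` with `sᵉ = t`, where `F` is the finite field obtained from the residue field `k`
by the same Kummer recipe as `L` is obtained from `K = k((t))`. By Hensel's lemma a power series
with constant term `1` is an `e`-th power, so `E` is a model of `L`, and its Galois group is
`μ_e ⋊ Gal(F/k)`, acting by `s ↦ ω s` and on coefficients.

Modulo `℘(E)` every series has a unique reduced form `c + ∑ aₘ s⁻ᵐ` with `m` prime to `p` and `c`
in `F / ℘(F)`, so `E / ℘(E) ≃ F / ℘(F) ⊕ F^{(m)}`. The trace identifies `F / ℘(F)` with `F_p`. Split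
the indices `m` into blocks having one member in each residue class modulo `e`: by Vandermonde
the vectors `(ω⁻ᵐ)ₘ`, `ω ∈ μ_e`, form an `F`-basis of each block, and together with a normal basis
of `F / k` they give a `k`-basis which the Galois group permutes freely, so the pole part is a free
module over the group algebra.
-/

open HahnSeries

section ArtinSchreier

variable {R : Type*} [CommRing R]

/-- The additive Artin–Schreier map `℘ : x ↦ x ^ p - x` of a ring of characteristic `p`. -/
def artinSchreier (R : Type*) [CommRing R] (p : ℕ) [ExpChar R p] : R →+ R :=
  (frobenius R p).toAddMonoidHom - AddMonoidHom.id R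

@[simp]
theorem artinSchreier_apply (p : ℕ) [ExpChar R p] (x : R) :
    artinSchreier R p x = x ^ p - x :=
  rfl

theorem map_artinSchreier {S : Type*} [CommRing S] (p : ℕ) [ExpChar R p] [ExpChar S p]
    (φ : R →+* S) (x : R) : φ (artinSchreier R p x) = artinSchreier S p (φ x) := by
  simp only [artinSchreier_apply, map_sub, map_pow]

theorem map_range_artinSchreier {S : Type*} [CommRing S] (p : ℕ) [ExpChar R p]
    [ExpChar S p] (φ : R ≃+* S) :
    (artinSchreier R p).range.map (φ : R →+ S) = (artinSchreier S p).range := by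
  have hcomp : (φ : R →+ S).comp (artinSchreier R p) = (artinSchreier S p).comp (φ : R →+ S) :=
    AddMonoidHom.ext (map_artinSchreier p (φ : R →+* S))
  rw [AddMonoidHom.map_range, hcomp, AddMonoidHom.range_comp,
    AddMonoidHom.range_eq_top.2 φ.surjective, ← AddMonoidHom.range_eq_map]

theorem mem_range_artinSchreier_of_mem {I : Ideal R} [HenselianRing R I] (p : ℕ)
    [Fact p.Prime] [CharP R p] {x : R} (hx : x ∈ I) : x ∈ (artinSchreier R p).range := by
  have hp := (Fact.out : p.Prime)
  have hmonic : (Polynomial.X ^ p - (Polynomial.X + Polynomial.C x)).Monic :=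
    Polynomial.monic_X_pow_sub <| by
      nontriviality R
      simpa using hp.one_lt
  obtain ⟨y, hy, -⟩ := HenselianRing.is_henselian (I := I) _ hmonic 0
    (by simpa [hp.ne_zero] using hx) (by simp [Polynomial.derivative_X_pow])
  refine ⟨y, ?_⟩
  simp only [Polynomial.IsRoot, Polynomial.eval_sub, Polynomial.eval_pow, Polynomial.eval_X,
    Polynomial.eval_add, Polynomial.eval_C] at hy
  rw [artinSchreier_apply]
  linear_combination hy

theorem exists_pow_eq_of_sub_one_mem {I : Ideal R} [HenselianRing R I] {n : ℕ}
    (hn : IsUnit (n : R)) {x : R} (hx : x - 1 ∈ I) : ∃ y, y ^ n = x := by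
  nontriviality R
  have hn₀ : n ≠ 0 := by
    rintro rfl
    simp at hn
  obtain ⟨y, hy, -⟩ := HenselianRing.is_henselian (I := I) _
    (Polynomial.monic_X_pow_sub_C x hn₀) 1
    (by simpa using I.neg_mem hx)
    (by simpa [Polynomial.derivative_X_pow] using hn.map (Ideal.Quotient.mk I))
  exact ⟨y, by simpa [Polynomial.IsRoot, sub_eq_zero] using hy⟩

variable {F : Type*} [Field F] [Finite F] (p : ℕ) [Fact p.Prime] [Algebra (ZMod p) F]

theorem range_artinSchreier_eq_ker_trace [CharP F p] :
    (artinSchreier F p).range = (Algebra.trace (ZMod p) F).toAddMonoidHom.ker := by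
  have hker : Module.finrank (ZMod p) ((artinSchreier F p).toZModLinearMap p).ker ≤ 1 := by
    refine finrank_le_one ⟨1, by simp⟩ fun ⟨w, hw⟩ ↦ ?_
    obtain ⟨c, hc⟩ := (mem_bot_iff_intCast p F).1
      ((Subfield.mem_bot_iff_pow_eq_self F p).2 (sub_eq_zero.1 hw))
    exact ⟨c, Subtype.ext (by simp [Algebra.smul_def, hc])⟩
  have hle : ((artinSchreier F p).toZModLinearMap p).range ≤ (Algebra.trace (ZMod p) F).ker := by
    rintro _ ⟨b, rfl⟩
    have htrace := Algebra.trace_eq_of_algEquiv (FiniteField.frobeniusAlgEquiv (ZMod p) F p) b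
    simp_all
  have hrank := ((artinSchreier F p).toZModLinearMap p).finrank_range_add_finrank_ker
  have hrank_trace := (Algebra.trace (ZMod p) F).finrank_range_add_finrank_ker
  rw [LinearMap.range_eq_top.2 (Algebra.trace_surjective _ _), finrank_top,
    Module.finrank_self] at hrank_trace
  have heq := Submodule.eq_of_le_of_finrank_le hle (by omega)
  exact congrArg Submodule.toAddSubgroup heq

end ArtinSchreier

instance hahnSeries_charP {Γ R : Type*} [AddCommMonoid Γ] [PartialOrder Γ]
    [IsOrderedCancelAddMonoid Γ] [NonAssocSemiring R] (p : ℕ) [CharP R p] :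
    CharP (HahnSeries Γ R) p :=
  charP_of_injective_ringHom (HahnSeries.C_injective) p

instance powerSeries_charP {R : Type*} [Semiring R] (p : ℕ) [CharP R p] :
    CharP (PowerSeries R) p :=
  charP_of_injective_ringHom (f := PowerSeries.C) PowerSeries.C_injective p

section LaurentMaps

variable {A B : Type*} [CommRing A] [CommRing B] (φ : A →+* B)

/-- The ring homomorphism `∑ aᵢ tⁱ ↦ ∑ φ(aᵢ) ωⁱ tⁱ` of Laurent series: `φ` on coefficients,
together with the substitution `t ↦ ω t`. -/
noncomputable def laurentTwist (ω : Bˣ) : LaurentSeries A →+* LaurentSeries B where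
  toFun x := ⟨fun i ↦ φ (x.coeff i) * (ω ^ i : Bˣ),
    x.isPWO_support.mono fun i hi h ↦ hi (by simp [h])⟩
  map_one' := by
    ext i
    obtain rfl | hi := eq_or_ne i 0 <;> simp_all [coeff_one]
  map_zero' := by ext; simp
  map_add' x y := by ext; simp [add_mul]
  map_mul' x y := by
    ext i
    simp only [coeff_mul, map_sum, map_mul, Finset.sum_mul]
    refine (Finset.sum_subset_zero_on_sdiff ?_ ?_ ?_).symm
    · intro ij hij
      simp_all only [Finset.mem_antidiagonal, mem_support, ne_eq, and_true]
      exact ⟨fun h ↦ hij.1 (by simp [h]), fun h ↦ hij.2.1 (by simp [h])⟩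
    · intro ij hij
      simp only [Finset.mem_sdiff, Finset.mem_antidiagonal, mem_support, ne_eq,
        Units.mul_left_eq_zero] at hij
      rw [← map_mul, ← hij.1.2.2]
      grind
    · intro ij hij
      rw [← (Finset.mem_antidiagonal.1 hij).2.2, zpow_add, Units.val_mul]
      ring

@[simp]
theorem coeff_laurentTwist (ω : Bˣ) (x : LaurentSeries A) (i : ℤ) :
    (laurentTwist φ ω x).coeff i = φ (x.coeff i) * (ω ^ i : Bˣ) :=
  rfl

@[simp]
theorem laurentTwist_single (ω : Bˣ) (i : ℤ) (a : A) :
    laurentTwist φ ω (single i a) = single i (φ a * (ω ^ i : Bˣ)) := by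
  ext j
  obtain rfl | hj := eq_or_ne j i <;> simp_all

variable (e : ℕ) [NeZero e]

/-- The ring homomorphism `∑ aᵢ tⁱ ↦ ∑ φ(aᵢ) tᵉⁱ` of Laurent series: `φ` on coefficients,
together with the substitution `t ↦ tᵉ`. -/
noncomputable def laurentExpand : LaurentSeries A →+* LaurentSeries B :=
  (embDomainRingHom (AddMonoidHom.mulLeft (e : ℤ))
    (mul_right_injective₀ (NeZero.ne (e : ℤ)))
    fun _ _ ↦ mul_le_mul_iff_right₀ (Int.natCast_pos.2 (NeZero.pos e))).comp (laurentTwist φ 1)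

@[simp]
theorem coeff_laurentExpand_mul (x : LaurentSeries A) (i : ℤ) :
    (laurentExpand φ e x).coeff (e * i) = φ (x.coeff i) := by
  refine (embDomain_coeff (f := ⟨⟨AddMonoidHom.mulLeft (e : ℤ), _⟩, _⟩)).trans ?_
  simp

theorem coeff_laurentExpand_of_not_dvd (x : LaurentSeries A) {i : ℤ} (hi : ¬ (e : ℤ) ∣ i) :
    (laurentExpand φ e x).coeff i = 0 :=
  embDomain_of_notMem_range fun ⟨j, hj⟩ ↦ hi ⟨j, hj.symm⟩

@[simp]
theorem laurentExpand_single (i : ℤ) (a : A) :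
    laurentExpand φ e (single i a) = single (e * i) (φ a) := by
  rw [laurentExpand, RingHom.comp_apply, laurentTwist_single]
  exact (embDomain_single).trans (by simp)

theorem laurentExpand_laurentTwist {C : Type*} [CommRing C] (ψ : B →+* C) (x : LaurentSeries A) :
    laurentExpand ψ e (laurentTwist φ 1 x) = laurentExpand (ψ.comp φ) e x := by
  simp only [laurentExpand, RingHom.comp_apply]
  congr 1
  ext
  simp

theorem exists_coeff_eq_coeff_mul_add (x : LaurentSeries A) (j : ℤ) :
    ∃ y : LaurentSeries A, ∀ i, y.coeff i = x.coeff (e * i + j) := by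
  refine ⟨ofSuppBddBelow (fun i ↦ x.coeff (e * i + j)) ⟨-|x.order| - |j|, fun i hi ↦ ?_⟩,
    fun _ ↦ rfl⟩
  by_contra! hlt
  refine hi (coeff_eq_zero_of_lt_order ?_)
  have he : (1 : ℤ) ≤ e := mod_cast NeZero.pos e
  nlinarith [neg_abs_le x.order, le_abs_self j, abs_nonneg x.order, abs_nonneg j]

theorem exists_eq_sum_laurentExpand_mul_single (x : LaurentSeries A) :
    ∃ y : ℕ → LaurentSeries A,
      x = ∑ j ∈ Finset.range e, laurentExpand (RingHom.id A) e (y j) * single (j : ℤ) 1 := by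
  choose y hy using fun j : ℕ ↦ exists_coeff_eq_coeff_mul_add e x j
  refine ⟨y, ?_⟩
  ext i
  have he : (0 : ℤ) < e := Int.natCast_pos.2 (NeZero.pos e)
  obtain ⟨r, hr⟩ := Int.eq_ofNat_of_zero_le (Int.emod_nonneg i he.ne')
  have hre : r < e := by have := Int.emod_lt_of_pos i he; omega
  have hdvd (j : ℕ) (hj : j < e) (hdiv : (e : ℤ) ∣ i - j) : j = r := by
    have := Int.emod_eq_emod_iff_emod_sub_eq_zero.2 (Int.emod_eq_zero_of_dvd hdiv)
    rw [hr, Int.emod_eq_of_lt (by omega) (by omega)] at this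
    omega
  obtain ⟨q, hq⟩ : (e : ℤ) ∣ i - r := hr ▸ Int.dvd_self_sub_emod
  simp only [coeff_sum, coeff_mul_single, mul_one]
  rw [Finset.sum_eq_single_of_mem r (Finset.mem_range.2 hre) fun j hj hjr ↦
    coeff_laurentExpand_of_not_dvd _ _ _ fun hdiv ↦ hjr (hdvd j (Finset.mem_range.1 hj) hdiv)]
  rw [hq, coeff_laurentExpand_mul, RingHom.id_apply, hy, ← hq, sub_add_cancel]

theorem eq_sum_laurentTwist_mul_C [Algebra A B] {ι : Type*} [Fintype ι] (b : Module.Basis ι A B)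
    (x : LaurentSeries B) :
    x = ∑ i, laurentTwist (algebraMap A B) 1 (x.map (b.coord i)) * C (b i) := by
  ext n
  simp [coeff_sum, C_apply, coeff_mul_single_zero, ← Algebra.smul_def, b.sum_repr]

end LaurentMaps

section ReducedForms

/-- The positive integers prime to `p`, which index the pole parts of the Artin–Schreier reduced
forms. -/
abbrev PoleOrder (p : ℕ) : Type := {m : ℕ // ¬ p ∣ m}

/-- The Laurent polynomial `∑ aₘ t⁻ᵐ` with poles of orders prime to `p` only. -/
noncomputable def poleSeries (F : Type*) [Semiring F] (p : ℕ) :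
    (PoleOrder p →₀ F) →ₗ[F] LaurentSeries F :=
  ofFinsuppLinearMap F ∘ₗ Finsupp.lmapDomain F F fun m ↦ -(m.1 : ℤ)

variable {F : Type*} {p : ℕ}

section Semiring

variable [Semiring F]

@[simp]
theorem coeff_poleSeries_neg (a : PoleOrder p →₀ F) (m : PoleOrder p) :
    (poleSeries F p a).coeff (-(m.1 : ℤ)) = a m :=
  Finsupp.mapDomain_apply (fun m n h ↦ Subtype.ext (by simpa using h)) a m

theorem coeff_poleSeries_of_forall_ne (a : PoleOrder p →₀ F) {i : ℤ}
    (hi : ∀ m : PoleOrder p, i ≠ -(m.1 : ℤ)) : (poleSeries F p a).coeff i = 0 :=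
  Finsupp.mapDomain_of_notMem_range a i fun ⟨m, hm⟩ ↦ hi m hm.symm

theorem poleSeries_single (m : PoleOrder p) (b : F) :
    poleSeries F p (Finsupp.single m b) = single (-(m.1 : ℤ)) b := by
  ext i
  simp only [poleSeries, LinearMap.comp_apply, Finsupp.lmapDomain_apply, Finsupp.mapDomain_single,
    coeff_ofFinsuppLinearMap]
  simp [Finsupp.single_apply, coeff_single, eq_comm]

theorem coeff_poleSeries_mul (a : PoleOrder p →₀ F) (i : ℤ) :
    (poleSeries F p a).coeff (p * i) = 0 :=
  coeff_poleSeries_of_forall_ne a fun m hm ↦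
    m.2 (Int.natCast_dvd_natCast.1 (by rw [← dvd_neg, ← hm]; exact dvd_mul_right _ i))

theorem mem_range_ofPowerSeries {x : LaurentSeries F} :
    x ∈ Set.range (ofPowerSeries ℤ F) ↔ ∀ i < 0, x.coeff i = 0 := by
  constructor
  · rintro ⟨u, rfl⟩ i hi
    simp [PowerSeries.coeff_coe, hi]
  · intro hx
    refine ⟨PowerSeries.mk fun n ↦ x.coeff n, ?_⟩
    ext i
    rw [PowerSeries.coeff_coe]
    split_ifs with hi
    · exact (hx i hi).symm
    · simp [abs_of_nonneg (not_lt.1 hi)]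

end Semiring

variable [Field F] [Fact p.Prime] [CharP F p]

theorem mem_range_artinSchreier_of_forall_nonpos {x : LaurentSeries F}
    (hx : ∀ i ≤ 0, x.coeff i = 0) : x ∈ (artinSchreier (LaurentSeries F) p).range := by
  obtain ⟨u, rfl⟩ := mem_range_ofPowerSeries.2 fun i hi ↦ hx i hi.le
  have hu : u ∈ Ideal.span {(PowerSeries.X : PowerSeries F)} := by
    rw [Ideal.mem_span_singleton, PowerSeries.X_dvd_iff, ← PowerSeries.coeff_zero_eq_constantCoeff]
    simpa [PowerSeries.coeff_coe] using hx 0 le_rfl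
  obtain ⟨v, rfl⟩ := mem_range_artinSchreier_of_mem p hu
  exact ⟨_, (map_artinSchreier p _ v).symm⟩

theorem single_mem_range_artinSchreier_sup [PerfectRing F p] (n : ℕ) (a : F) :
    single (-n : ℤ) a ∈ (artinSchreier (LaurentSeries F) p).range ⊔
      ((C (Γ := ℤ)).toAddMonoidHom.range ⊔ (poleSeries F p).toAddMonoidHom.range) := by
  induction n using Nat.strong_induction_on generalizing a with
  | _ n ih
  obtain rfl | hn := eq_or_ne n 0
  · exact AddSubgroup.mem_sup_right (AddSubgroup.mem_sup_left ⟨a, by simp⟩)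
  by_cases hpn : p ∣ n
  · obtain ⟨m, rfl⟩ := hpn
    obtain ⟨b, rfl⟩ := surjective_frobenius F p a
    have hm : m < p * m :=
      lt_mul_of_one_lt_left (Nat.pos_of_mul_pos_left (Nat.pos_of_ne_zero hn))
        (Fact.out : p.Prime).one_lt
    have hsplit : single (-(p * m : ℕ) : ℤ) (frobenius F p b) =
        artinSchreier _ p (single (-m : ℤ) b) + single (-m : ℤ) b := by
      simp [single_pow, frobenius_def]
    rw [hsplit]
    exact add_mem (AddSubgroup.mem_sup_left ⟨_, rfl⟩) (ih m hm b)
  · exact AddSubgroup.mem_sup_right (AddSubgroup.mem_sup_right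
      ⟨Finsupp.single ⟨n, hpn⟩ a, poleSeries_single ⟨n, hpn⟩ a⟩)

variable (F p) in
theorem range_artinSchreier_sup_eq_top [PerfectRing F p] :
    (artinSchreier (LaurentSeries F) p).range ⊔
      ((C (Γ := ℤ)).toAddMonoidHom.range ⊔ (poleSeries F p).toAddMonoidHom.range) = ⊤ := by
  refine eq_top_iff.2 fun x _ ↦ ?_
  let y : LaurentSeries F := ∑ i ∈ Finset.Icc x.order 0, single i (x.coeff i)
  have hy : y ∈ _ := sum_mem fun i hi ↦ by
    obtain ⟨n, hn⟩ := Int.eq_ofNat_of_zero_le (neg_nonneg.2 (Finset.mem_Icc.1 hi).2)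
    rw [← neg_neg i, hn]
    exact single_mem_range_artinSchreier_sup (p := p) n _
  have hxy : x - y ∈ (artinSchreier (LaurentSeries F) p).range := by
    refine mem_range_artinSchreier_of_forall_nonpos fun i hi ↦ ?_
    simp only [y, coeff_sub, coeff_sum, coeff_single, eq_comm (a := i), Finset.sum_ite_eq',
      Finset.mem_Icc, hi, and_true]
    split_ifs with hord
    · exact sub_self _
    · rw [sub_zero, coeff_eq_zero_of_lt_order (not_le.1 hord)]
  exact sub_add_cancel x y ▸ add_mem (AddSubgroup.mem_sup_left hxy) hy

theorem coeff_eq_zero_of_coeff_artinSchreier_mul_eq_zero {y : LaurentSeries F}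
    (hy : ∀ i < 0, (artinSchreier _ p y).coeff (p * i) = 0) : ∀ i < 0, y.coeff i = 0 := by
  have hp := (Fact.out : p.Prime)
  obtain rfl | hy₀ := eq_or_ne y 0
  · simp
  suffices hord : 0 ≤ y.order from fun i hi ↦ coeff_eq_zero_of_lt_order (hi.trans_le hord)
  by_contra! hord
  have hlt : p * y.order < y.order := by
    have : (1 : ℤ) < p := mod_cast hp.one_lt
    nlinarith
  refine coeff_order_eq_zero.not.2 (pow_ne_zero p hy₀) ?_
  simpa [coeff_eq_zero_of_lt_order hlt] using hy _ hord

theorem C_add_poleSeries_mem_range_artinSchreier {c : F} {a : PoleOrder p →₀ F} :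
    C c + poleSeries F p a ∈ (artinSchreier (LaurentSeries F) p).range ↔
      c ∈ (artinSchreier F p).range ∧ a = 0 := by
  have hneg (m : PoleOrder p) : -(m.1 : ℤ) < 0 :=
    neg_neg_of_pos (Int.natCast_pos.2 (Nat.pos_of_ne_zero fun h ↦ m.2 (h ▸ dvd_zero p)))
  constructor
  · rintro ⟨y, hy⟩
    have hcoeff : ∀ i < 0, y.coeff i = 0 :=
      coeff_eq_zero_of_coeff_artinSchreier_mul_eq_zero fun i hi ↦ by
        have : (p : ℤ) * i ≠ 0 := mul_ne_zero (NeZero.ne _) hi.ne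
        rw [hy, coeff_add, coeff_poleSeries_mul, C_apply, coeff_single_of_ne this, add_zero]
    obtain ⟨u, rfl⟩ := mem_range_ofPowerSeries.2 hcoeff
    rw [← map_artinSchreier] at hy
    constructor
    · have ha : (poleSeries F p a).coeff 0 = 0 := by simpa using coeff_poleSeries_mul a 0
      have hzero : PowerSeries.constantCoeff (artinSchreier _ p u) = c := by
        simpa [PowerSeries.coeff_coe, ha, -artinSchreier_apply] using congrArg (coeff · 0) hy
      exact ⟨PowerSeries.constantCoeff u, by rw [← map_artinSchreier, hzero]⟩
    · ext m
      have hm := congrArg (coeff · (-(m.1 : ℤ))) hy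
      simp only [PowerSeries.coeff_coe, if_pos (hneg m), coeff_add, C_apply,
        coeff_single_of_ne (hneg m).ne, coeff_poleSeries_neg, zero_add] at hm
      exact hm.symm
  · rintro ⟨⟨b, rfl⟩, rfl⟩
    exact ⟨C b, by rw [← map_artinSchreier, map_zero, add_zero]⟩

variable (F p) in
/-- The homomorphism `F / ℘F ⊕ F^{(PoleOrder p)} → F((t)) / ℘F((t))` which sends a reduced form
`(c, a)` to the class of `c + ∑ aₘ t⁻ᵐ`. -/
noncomputable def reducedFormHom :
    (F ⧸ (artinSchreier F p).range) × (PoleOrder p →₀ F) →+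
      LaurentSeries F ⧸ (artinSchreier (LaurentSeries F) p).range :=
  (QuotientAddGroup.map _ _ (C (Γ := ℤ)).toAddMonoidHom
    (by rintro _ ⟨b, rfl⟩; exact ⟨C b, (map_artinSchreier p _ b).symm⟩)).coprod
    ((QuotientAddGroup.mk' _).comp (poleSeries F p).toAddMonoidHom)

theorem bijective_reducedFormHom [PerfectRing F p] :
    Function.Bijective (reducedFormHom F p) := by
  constructor
  · rw [injective_iff_map_eq_zero]
    rintro ⟨⟨c⟩, a⟩ h
    obtain ⟨hc, rfl⟩ :=
      C_add_poleSeries_mem_range_artinSchreier.1 ((QuotientAddGroup.eq_zero_iff _).1 h)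
    exact Prod.ext ((QuotientAddGroup.eq_zero_iff _).2 hc) rfl
  · rintro ⟨x⟩
    obtain ⟨_, ⟨y, rfl⟩, _, hz, rfl⟩ := AddSubgroup.mem_sup.1
      (range_artinSchreier_sup_eq_top F p ▸ AddSubgroup.mem_top x)
    obtain ⟨_, ⟨c, rfl⟩, _, ⟨a, rfl⟩, rfl⟩ := AddSubgroup.mem_sup.1 hz
    exact ⟨(QuotientAddGroup.mk c, a),
      QuotientAddGroup.eq.2 ⟨y, (neg_add_cancel_comm_assoc _ _).symm⟩⟩

end ReducedForms

section TameGroup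

variable (k F : Type*) [Field k] [Field F] [Algebra k F] (e : ℕ)

/-- The action of `Gal(F/k)` on the group `μ_e` of `e`-th roots of unity in `F`. -/
def rootsOfUnityAut : Gal(F/k) →* MulAut (rootsOfUnity e F) where
  toFun τ := τ.toMulEquiv.restrictRootsOfUnity e
  map_one' := rfl
  map_mul' _ _ := rfl

/-- The semidirect product `μ_e ⋊ Gal(F/k)`, which is the Galois group of `F((s))` over `k((sᵉ))`:
the pair `(ω, τ)` acts by `s ↦ ω s` and by `τ` on the coefficients. -/
abbrev TameGroup : Type _ := rootsOfUnity e F ⋊[rootsOfUnityAut k F e] Gal(F/k)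

variable {k F e}

@[simp]
theorem coe_rootsOfUnityAut_apply (τ : Gal(F/k)) (ω : rootsOfUnity e F) :
    ((rootsOfUnityAut k F e τ ω : Fˣ) : F) = τ (ω : Fˣ) :=
  rfl

variable (k F e) in
/-- The action of `μ_e ⋊ Gal(F/k)` on `F((s))`. -/
noncomputable def tameAction : TameGroup k F e →* (LaurentSeries F →+* LaurentSeries F) where
  toFun g := laurentTwist (g.right : F →+* F) g.left
  map_one' := by ext; simp
  map_mul' g h := by
    ext x i
    simp [mul_zpow, mul_left_comm, mul_comm]

theorem tameAction_apply (g : TameGroup k F e) :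
    tameAction k F e g = laurentTwist (g.right : F →+* F) g.left :=
  rfl

theorem tameAction_C (g : TameGroup k F e) (a : F) : tameAction k F e g (C a) = C (g.right a) := by
  simp [tameAction_apply, C_apply]

theorem tameAction_single_one (g : TameGroup k F e) :
    tameAction k F e g (single 1 1) = C (g.left : Fˣ).val * single 1 1 := by
  simp [tameAction_apply, C_apply]

variable [NeZero e]

theorem tameAction_laurentExpand (g : TameGroup k F e) (x : LaurentSeries k) :
    tameAction k F e g (laurentExpand (algebraMap k F) e x) =
      laurentExpand (algebraMap k F) e x := by
  ext i
  rw [tameAction_apply, coeff_laurentTwist]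
  by_cases hi : (e : ℤ) ∣ i
  · obtain ⟨j, rfl⟩ := hi
    have hpow : (g.left : Fˣ) ^ (e : ℤ) = 1 := (zpow_natCast _ e).trans g.left.2
    simp [zpow_mul, hpow]
  · simp [coeff_laurentExpand_of_not_dvd _ _ _ hi]

variable {K : Type*} [Field K] [Algebra K (LaurentSeries F)]

/-- `K`-linear form of `tameAction`, for a field `K` that is identified with `k((sᵉ))`. -/
noncomputable def tameAlgHom
    (hK : (algebraMap K (LaurentSeries F)).range = (laurentExpand (algebraMap k F) e).range) :
    TameGroup k F e →* (LaurentSeries F →ₐ[K] LaurentSeries F) where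
  toFun g :=
    { tameAction k F e g with
      commutes' a := by
        obtain ⟨x, hx⟩ := hK.le ⟨a, rfl⟩
        simpa [hx] using tameAction_laurentExpand g x }
  map_one' := by ext1; simp
  map_mul' _ _ := by ext1; simp

theorem adjoin_insert_single_range_C_eq_top [FiniteDimensional k F]
    (hK : (algebraMap K (LaurentSeries F)).range = (laurentExpand (algebraMap k F) e).range) :
    Algebra.adjoin K (insert (single 1 1) (Set.range (C : F →+* LaurentSeries F))) = ⊤ := by
  set S := Algebra.adjoin K (insert (single 1 1) (Set.range (C : F →+* LaurentSeries F)))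
  have hsingle : single 1 1 ∈ S := Algebra.subset_adjoin (Set.mem_insert _ _)
  have hC (a : F) : C a ∈ S := Algebra.subset_adjoin (Set.mem_insert_of_mem _ ⟨a, rfl⟩)
  have hbase (x : LaurentSeries k) : laurentExpand (algebraMap k F) e x ∈ S := by
    obtain ⟨a, ha⟩ := hK.ge ⟨x, rfl⟩
    exact ha ▸ S.algebraMap_mem a
  have hexpand (x : LaurentSeries F) : laurentExpand (RingHom.id F) e x ∈ S := by
    rw [eq_sum_laurentTwist_mul_C (Module.finBasis k F) x, map_sum]
    refine sum_mem fun i _ ↦ ?_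
    rw [map_mul, laurentExpand_laurentTwist, RingHom.id_comp, C_apply, laurentExpand_single,
      mul_zero]
    exact mul_mem (hbase _) (hC _)
  refine eq_top_iff.2 fun x _ ↦ ?_
  obtain ⟨y, rfl⟩ := exists_eq_sum_laurentExpand_mul_single e x
  refine sum_mem fun j _ ↦ mul_mem (hexpand _) ?_
  simpa [single_pow] using pow_mem hsingle j

theorem injective_tameAlgHom
    (hK : (algebraMap K (LaurentSeries F)).range = (laurentExpand (algebraMap k F) e).range) :
    Function.Injective (tameAlgHom hK) := by
  intro g h hgh
  have happly (x : LaurentSeries F) : tameAction k F e g x = tameAction k F e h x :=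
    DFunLike.congr_fun hgh x
  ext a
  · have := happly (single 1 1)
    rw [tameAction_single_one, tameAction_single_one] at this
    exact C_injective (mul_right_cancel₀ (by simp) this)
  · exact C_injective (by rw [← tameAction_C, happly, tameAction_C])

theorem exists_algEquiv_comp_eq_of_comp_algebraMap_eq [Normal k F] {E : Type*} [Field E]
    (f g : F →+* E) (hfg : f.comp (algebraMap k F) = g.comp (algebraMap k F)) :
    ∃ τ : Gal(F/k), ∀ a, g (τ a) = f a := by
  let := g.toAlgebra
  let := (g.comp (algebraMap k F)).toAlgebra
  have : IsScalarTower k F E := .of_algebraMap_eq fun _ ↦ rfl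
  let f' : F →ₐ[k] E := { f with commutes' := RingHom.congr_fun hfg }
  exact ⟨f'.restrictNormal' F, f'.restrictNormal_commutes F⟩

theorem surjective_tameAlgHom [FiniteDimensional k F] [Normal k F] {ζ : F}
    (hζ : IsPrimitiveRoot ζ e)
    (hK : (algebraMap K (LaurentSeries F)).range = (laurentExpand (algebraMap k F) e).range) :
    Function.Surjective (tameAlgHom hK) := by
  intro σ
  have hfix (x : LaurentSeries k) :
      σ (laurentExpand (algebraMap k F) e x) = laurentExpand (algebraMap k F) e x := by
    obtain ⟨a, ha⟩ := hK.ge ⟨x, rfl⟩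
    rw [← ha, σ.commutes]
  obtain ⟨τ, hτ⟩ := exists_algEquiv_comp_eq_of_comp_algebraMap_eq (k := k)
    ((σ : LaurentSeries F →+* LaurentSeries F).comp C) C
    (RingHom.ext fun c ↦ by simpa [C_apply] using hfix (C c))
  have hroot : (σ (single 1 1) / single 1 1) ^ e = 1 := by
    have := hfix (single 1 1)
    rw [laurentExpand_single, mul_one, map_one] at this
    rw [div_pow, ← map_pow, single_pow, one_pow, nsmul_eq_mul, mul_one, this, div_self (by simp)]
  obtain ⟨i, -, hi⟩ := (hζ.map_of_injective (C_injective (Γ := ℤ))).eq_pow_of_pow_eq_one hroot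
  refine ⟨⟨rootsOfUnity.mkOfPowEq (ζ ^ i) (by rw [pow_right_comm, hζ.pow_eq_one, one_pow]),
    τ⟩, AlgHom.ext_of_adjoin_eq_top (adjoin_insert_single_range_C_eq_top hK) ?_⟩
  rintro _ (rfl | ⟨a, rfl⟩)
  · refine (tameAction_single_one _).trans ?_
    rw [rootsOfUnity.val_mkOfPowEq_coe, map_pow, hi, div_mul_cancel₀ _ (by simp)]
  · exact (tameAction_C _ a).trans (hτ a)

/-- The Galois group of `F((s))` over `k((sᵉ))`, when `F` is a finite normal extension of `k`
containing a primitive `e`-th root of unity. -/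
noncomputable def tameGalEquiv [FiniteDimensional k F] [Normal k F] {ζ : F}
    (hζ : IsPrimitiveRoot ζ e)
    (hK : (algebraMap K (LaurentSeries F)).range = (laurentExpand (algebraMap k F) e).range) :
    TameGroup k F e ≃* Gal(LaurentSeries F/K) :=
  (MulEquiv.ofBijective (tameAlgHom hK).toHomUnits
    ⟨fun _ _ h ↦ injective_tameAlgHom hK (congrArg Units.val h),
      fun u ↦ (surjective_tameAlgHom hζ hK u).imp fun _ h ↦ Units.ext h⟩).trans
    (AlgEquiv.algHomUnitsEquiv K (LaurentSeries F))

theorem tameGalEquiv_apply [FiniteDimensional k F] [Normal k F] {ζ : F}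
    (hζ : IsPrimitiveRoot ζ e)
    (hK : (algebraMap K (LaurentSeries F)).range = (laurentExpand (algebraMap k F) e).range)
    (g : TameGroup k F e) (x : LaurentSeries F) :
    tameGalEquiv hζ hK g x = tameAction k F e g x :=
  rfl

end TameGroup

section PermutedBasis

variable {R V ι G : Type*} [Semiring R] [AddCommMonoid V] [Module R V]

/-- The identification of a module having a basis indexed by `ι × G` with the direct sum of `ι`
copies of `R[G]`, which sends the basis vector `b (i, g)` to `g` in the `i`-th copy. -/
noncomputable def finsuppMonoidAlgebraEquivOfBasis (b : Module.Basis (ι × G) R V) :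
    V ≃ₗ[R] (ι →₀ MonoidAlgebra R G) :=
  b.repr ≪≫ₗ Finsupp.curryLinearEquiv R ≪≫ₗ
    Finsupp.mapRange.linearEquiv (MonoidAlgebra.coeffLinearEquiv R).symm

theorem finsuppMonoidAlgebraEquivOfBasis_apply_basis (b : Module.Basis (ι × G) R V) (i : ι)
    (g : G) :
    finsuppMonoidAlgebraEquivOfBasis b (b (i, g)) =
      Finsupp.single i (MonoidAlgebra.single g 1) := by
  simp [finsuppMonoidAlgebraEquivOfBasis, Finsupp.curryLinearEquiv]

theorem finsuppMonoidAlgebraEquivOfBasis_apply_map {R V ι G : Type*} [CommSemiring R]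
    [AddCommMonoid V] [Module R V] [Mul G] (b : Module.Basis (ι × G) R V) {T : V →ₗ[R] V} {g : G}
    (hT : ∀ i h, T (b (i, h)) = b (i, g * h)) (v : V) (i : ι) :
    finsuppMonoidAlgebraEquivOfBasis b (T v) i =
      MonoidAlgebra.single g 1 * finsuppMonoidAlgebraEquivOfBasis b v i := by
  let E := (Finsupp.lapply i ∘ₗ (finsuppMonoidAlgebraEquivOfBasis b).toLinearMap)
  suffices E ∘ₗ T = LinearMap.mulLeft R (MonoidAlgebra.single g 1) ∘ₗ E from
    LinearMap.congr_fun this v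
  classical
  refine b.ext fun ⟨j, h⟩ ↦ ?_
  simp only [E, LinearMap.comp_apply, LinearEquiv.coe_coe, hT,
    finsuppMonoidAlgebraEquivOfBasis_apply_basis, Finsupp.lapply_apply, Finsupp.single_apply,
    LinearMap.mulLeft_apply]
  split_ifs <;> simp [MonoidAlgebra.single_mul_single]

end PermutedBasis

section PoleBasis

theorem infinite_poleOrder_mod_eq {p e : ℕ} [Fact p.Prime] (hpe : p.Coprime e) (j : Fin e) :
    Infinite {m : PoleOrder p // m.1 % e = j} := by
  have hp := (Fact.out : p.Prime)
  obtain ⟨z, hzp, hze⟩ := Nat.chineseRemainder hpe 1 j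
  have hz : ¬ p ∣ z := fun h ↦ hp.not_dvd_one ((hzp.dvd_iff dvd_rfl).1 h)
  have hpe₀ : p * e ≠ 0 := mul_ne_zero hp.ne_zero j.pos.ne'
  refine Infinite.of_injective (fun N : ℕ ↦ ⟨⟨z + p * e * N, fun h ↦ hz ?_⟩, ?_⟩) fun N M h ↦ ?_
  · rwa [mul_assoc, Nat.dvd_add_left (dvd_mul_right _ _)] at h
  · have hmod : (z + p * e * N) % e = z % e := by
      rw [mul_right_comm, Nat.add_mul_mod_self_right]
    exact hmod.trans (Eq.trans hze (Nat.mod_eq_of_lt j.2))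
  · simpa [hpe₀, hp.ne_zero, j.pos.ne'] using h

theorem exists_poleOrder_equiv_prod_fin {p e : ℕ} [Fact p.Prime] [NeZero e] (hpe : p.Coprime e) :
    ∃ u : PoleOrder p ≃ ℕ × Fin e, ∀ m, ((u m).2 : ℕ) = m.1 % e := by
  let residue (m : PoleOrder p) : Fin e := ⟨m.1 % e, Nat.mod_lt _ (NeZero.pos e)⟩
  have hfiber (j : Fin e) : Nonempty ({m // residue m = j} ≃ ℕ) := by
    have := infinite_poleOrder_mod_eq hpe j
    have : Infinite {m // residue m = j} := by simpa only [residue, Fin.ext_iff] using this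
    exact (nonempty_denumerable _).map fun h ↦ h.eqv
  exact ⟨(Equiv.sigmaFiberEquiv residue).symm.trans
    ((Equiv.sigmaCongrRight fun j ↦ (hfiber j).some).trans
      ((Equiv.sigmaEquivProd _ _).trans (Equiv.prodComm _ _))), fun _ ↦ rfl⟩

variable {F : Type*} [Field F] {ι : Type*} [Finite ι] {v : ι → F} {n : ℕ}

theorem exists_basis_apply_eq_pow (hv : Function.Injective v) (hn : Nat.card ι = n) :
    ∃ b : Module.Basis ι F (Fin n → F), ∀ i j, b i j = v i ^ (j : ℕ) := by
  classical
  let c : ι ≃ Fin n := Finite.equivFinOfCardEq hn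
  have hindep : LinearIndependent F fun i (j : Fin n) ↦ v (c.symm i) ^ (j : ℕ) :=
    Matrix.linearIndependent_rows_of_det_ne_zero
      (Matrix.det_vandermonde_ne_zero_iff.2 (hv.comp c.symm.injective))
  let b := basisOfPiSpaceOfLinearIndependent hindep
  refine ⟨b.reindex c.symm, fun i j ↦ ?_⟩
  simp [b]

theorem exists_basis_finsupp_apply_eq_ite_pow {M N : Type*} [DecidableEq N] (u : M ≃ N × Fin n)
    (hv : Function.Injective v) (hn : Nat.card ι = n) :
    ∃ b : Module.Basis (N × ι) F (M →₀ F), ∀ x i m,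
      b (x, i) m = if (u m).1 = x then v i ^ ((u m).2 : ℕ) else 0 := by
  obtain ⟨b, hb⟩ := exists_basis_apply_eq_pow hv hn
  let E : (N →₀ Fin n → F) ≃ₗ[F] (M →₀ F) :=
    Finsupp.mapRange.linearEquiv (Finsupp.linearEquivFunOnFinite F F (Fin n)).symm ≪≫ₗ
      (Finsupp.curryLinearEquiv F).symm ≪≫ₗ Finsupp.domLCongr u.symm
  refine ⟨((Finsupp.basis fun _ : N ↦ b).map E).reindex (Equiv.sigmaEquivProd N ι),
    fun x i m ↦ ?_⟩
  have hE (y : N →₀ Fin n → F) : E y m = y (u m).1 (u m).2 := rfl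
  simp only [Module.Basis.reindex_apply, Module.Basis.map_apply, hE]
  obtain rfl | hx := eq_or_ne (u m).1 x <;> simp_all [Finsupp.coe_basis]

end PoleBasis

section PoleTwist

variable {k F : Type*} [Field k] [Field F] [Algebra k F] {p e : ℕ}

variable (p) in
/-- The action of `μ_e ⋊ Gal(F/k)` on the coefficients of the pole parts `∑ aₘ s⁻ᵐ`. -/
noncomputable def poleTwist (g : TameGroup k F e) :
    (PoleOrder p →₀ F) →ₗ[k] (PoleOrder p →₀ F) where
  toFun a := .onFinset a.support (fun m ↦ g.right (a m) * ((g.left : Fˣ)⁻¹ ^ m.1 : Fˣ))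
    fun m hm ↦ by
      rw [Finsupp.mem_support_iff]
      rintro h
      simp [h] at hm
  map_add' a b := by ext; simp [add_mul]
  map_smul' c a := by ext; simp

@[simp]
theorem poleTwist_apply (g : TameGroup k F e) (a : PoleOrder p →₀ F) (m : PoleOrder p) :
    poleTwist p g a m = g.right (a m) * ((g.left : Fˣ)⁻¹ ^ m.1 : Fˣ) :=
  rfl

theorem tameAction_poleSeries (g : TameGroup k F e) (a : PoleOrder p →₀ F) :
    tameAction k F e g (poleSeries F p a) = poleSeries F p (poleTwist p g a) := by
  ext i
  rw [tameAction_apply, coeff_laurentTwist]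
  by_cases hi : ∃ m : PoleOrder p, i = -(m.1 : ℤ)
  · obtain ⟨m, rfl⟩ := hi
    simp
  · push Not at hi
    simp [coeff_poleSeries_of_forall_ne _ hi]

theorem exists_basis_poleOrder_rootsOfUnity [Fact p.Prime] [NeZero e] (hpe : p.Coprime e) {ζ : F}
    (hζ : IsPrimitiveRoot ζ e) :
    ∃ (block : PoleOrder p → ℕ) (b : Module.Basis (ℕ × rootsOfUnity e F) F (PoleOrder p →₀ F)),
      ∀ i ω m, b (i, ω) m = if block m = i then (((ω : Fˣ)⁻¹ ^ m.1 : Fˣ) : F) else 0 := by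
  obtain ⟨u, hu⟩ := exists_poleOrder_equiv_prod_fin (p := p) hpe
  obtain ⟨b, hb⟩ := exists_basis_finsupp_apply_eq_ite_pow u
    (v := fun ω : rootsOfUnity e F ↦ (((ω : Fˣ)⁻¹ : Fˣ) : F))
    (fun ω ω' h ↦ Subtype.ext (inv_injective (Units.ext h))) hζ.card_rootsOfUnity
  refine ⟨fun m ↦ (u m).1, b, fun i ω m ↦ ?_⟩
  have hω : (ω : Fˣ)⁻¹ ^ e = 1 := by rw [inv_pow, ω.2, inv_one]
  rw [hb, hu, ← Units.val_pow_eq_pow_val, ← pow_eq_pow_mod m.1 hω]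

theorem exists_basis_poleTwist [FiniteDimensional k F] [IsGalois k F] [Fact p.Prime] [NeZero e]
    (hpe : p.Coprime e) {ζ : F} (hζ : IsPrimitiveRoot ζ e) :
    ∃ b : Module.Basis (ℕ × TameGroup k F e) k (PoleOrder p →₀ F),
      ∀ g i h, poleTwist p g (b (i, h)) = b (i, g * h) := by
  obtain ⟨block, b, hb⟩ := exists_basis_poleOrder_rootsOfUnity (p := p) hpe hζ
  let index : Gal(F/k) × ℕ × rootsOfUnity e F ≃ ℕ × TameGroup k F e :=
    (Equiv.prodComm _ _).trans ((Equiv.prodAssoc _ _ _).trans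
      ((Equiv.refl ℕ).prodCongr SemidirectProduct.equivProd.symm))
  let c := ((IsGalois.normalBasis k F).smulTower b).reindex index
  have hc (i : ℕ) (h : TameGroup k F e) (m : PoleOrder p) : c (i, h) m =
      h.right (IsGalois.normalBasis k F 1) * b (i, h.left) m := by
    have hindex : index.symm (i, h) = (h.right, i, h.left) := rfl
    rw [Module.Basis.reindex_apply, hindex, Module.Basis.smulTower_apply,
      IsGalois.normalBasis_apply, Finsupp.smul_apply, smul_eq_mul]
  refine ⟨c, fun g i h ↦ ?_⟩
  ext m
  rw [poleTwist_apply, hc, hc, hb, hb]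
  split_ifs
  · simp [mul_pow, mul_assoc, mul_comm]
  · simp

theorem exists_linearEquiv_poleTwist [FiniteDimensional k F] [IsGalois k F] [Fact p.Prime]
    [NeZero e] [Algebra (ZMod p) k] [FiniteDimensional (ZMod p) k] [Algebra (ZMod p) F]
    [IsScalarTower (ZMod p) k F]
    (hpe : p.Coprime e) {ζ : F} (hζ : IsPrimitiveRoot ζ e) {G : Type*} [Mul G]
    (Θ : G ≃* TameGroup k F e) :
    ∃ E : (PoleOrder p →₀ F) ≃ₗ[ZMod p] (ℕ →₀ MonoidAlgebra (ZMod p) G), ∀ g a i,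
      E (poleTwist p (Θ g) a) i = MonoidAlgebra.single g 1 * E a i := by
  obtain ⟨b, hb⟩ := exists_basis_poleTwist (k := k) hpe hζ
  have : NeZero (Module.finrank (ZMod p) k) := ⟨Module.finrank_pos.ne'⟩
  obtain ⟨c⟩ : Nonempty (Fin (Module.finrank (ZMod p) k) × ℕ ≃ ℕ) :=
    (nonempty_denumerable _).map fun h ↦ h.eqv
  let index := (Equiv.prodAssoc _ _ _).symm.trans (c.prodCongr Θ.symm.toEquiv)
  refine ⟨finsuppMonoidAlgebraEquivOfBasis
      (((Module.finBasis (ZMod p) k).smulTower b).reindex index), fun g a i ↦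
    finsuppMonoidAlgebraEquivOfBasis_apply_map _
      (T := (poleTwist p (Θ g)).restrictScalars (ZMod p)) (fun i h ↦ ?_) a i⟩
  simp [index, Module.Basis.smulTower_apply, hb]

end PoleTwist

section TameModule

/-- The isomorphism `F / ℘F ≃ F_p` which the trace induces, for a finite field `F`. -/
noncomputable def quotientArtinSchreierEquiv (F : Type*) [Field F] [Finite F] (p : ℕ)
    [Fact p.Prime] [Algebra (ZMod p) F] [CharP F p] :
    F ⧸ (artinSchreier F p).range ≃+ ZMod p :=
  (QuotientAddGroup.quotientAddEquivOfEq (range_artinSchreier_eq_ker_trace p)).trans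
    (QuotientAddGroup.quotientKerEquivOfSurjective (Algebra.trace (ZMod p) F).toAddMonoidHom
      (Algebra.trace_surjective (ZMod p) F))

theorem exists_addEquiv_quotient_artinSchreier_tameAction {k F : Type*} [Field k] [Finite k]
    [Field F] [Finite F] [Algebra k F] {p e : ℕ} [Fact p.Prime] [CharP k p] [CharP F p] [NeZero e]
    (hpe : p.Coprime e) {ζ : F} (hζ : IsPrimitiveRoot ζ e) {G : Type*} [Mul G]
    (Θ : G ≃* TameGroup k F e) :
    ∃ E : (LaurentSeries F ⧸ (artinSchreier (LaurentSeries F) p).range) ≃+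
        (ZMod p × (ℕ →₀ MonoidAlgebra (ZMod p) G)),
      ∀ g x, (E (QuotientAddGroup.mk (tameAction k F e (Θ g) x))).1 =
          (E (QuotientAddGroup.mk x)).1 ∧
        ∀ i, (E (QuotientAddGroup.mk (tameAction k F e (Θ g) x))).2 i =
          MonoidAlgebra.single g 1 * (E (QuotientAddGroup.mk x)).2 i := by
  let := ZMod.algebra k p
  let := ZMod.algebra F p
  have : IsScalarTower (ZMod p) k F := .of_algebraMap_eq' (RingHom.ext_zmod _ _)
  obtain ⟨E, hE⟩ := exists_linearEquiv_poleTwist hpe hζ Θ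
  let reduced := AddEquiv.ofBijective (reducedFormHom F p) bijective_reducedFormHom
  refine ⟨reduced.symm.trans ((quotientArtinSchreierEquiv F p).prodCongr E.toAddEquiv),
    fun g x ↦ ?_⟩
  obtain ⟨⟨⟨c⟩, a⟩, hx : QuotientAddGroup.mk (C c + poleSeries F p a) = _⟩ :=
    bijective_reducedFormHom.surjective (QuotientAddGroup.mk x)
  have hgx : QuotientAddGroup.mk (C ((Θ g).right c) + poleSeries F p (poleTwist p (Θ g) a)) =
      (QuotientAddGroup.mk (tameAction k F e (Θ g) x) :
        LaurentSeries F ⧸ (artinSchreier (LaurentSeries F) p).range) := by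
    obtain ⟨y, hy⟩ := QuotientAddGroup.eq.1 hx
    refine QuotientAddGroup.eq.2 ⟨tameAction k F e (Θ g) y, ?_⟩
    rw [← map_artinSchreier, hy, map_add, map_neg, map_add, tameAction_C, tameAction_poleSeries]
  have hreduced (c : F) (a : PoleOrder p →₀ F) :
      reduced.symm (QuotientAddGroup.mk (C c + poleSeries F p a)) = (QuotientAddGroup.mk c, a) :=
    reduced.symm_apply_apply (QuotientAddGroup.mk c, a)
  rw [← hx, ← hgx, AddEquiv.trans_apply, AddEquiv.trans_apply, hreduced, hreduced]
  exact ⟨Algebra.trace_eq_of_algEquiv ((Θ g).right.restrictScalars (ZMod p)) c, hE g a⟩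

end TameModule

section MaximalKummer

open IntermediateField

/-- The extension `E / K` is the composite of all Kummer extensions of exponent `e` of the
cyclotomic field `K(ζ)`: the root of unity `ζ` of order `e` lies in `E`, every element of `K(ζ)`
has an `e`-th root in `E`, and these roots generate `E`. -/
structure IsMaximalKummer (K E : Type*) [Field K] [Field E] [Algebra K E] (e : ℕ) (ζ : E) :
    Prop where
  isPrimitiveRoot : IsPrimitiveRoot ζ e
  exists_pow_eq : ∀ y ∈ K⟮ζ⟯, ∃ x, x ^ e = y
  adjoin_eq_top : adjoin K {x : E | x ^ e ∈ K⟮ζ⟯} = ⊤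

variable {K E : Type*} [Field K] [Field E] [Algebra K E] {e : ℕ} {ζ : E}

theorem isSeparable_of_pow_eq_algebraMap (he : (e : K) ≠ 0) {x : E} {y : K}
    (hx : x ^ e = algebraMap K E y) : IsSeparable K x := by
  obtain rfl | hy := eq_or_ne y 0
  · have he₀ : e ≠ 0 := by
      rintro rfl
      simp at he
    rw [map_zero, pow_eq_zero_iff he₀] at hx
    exact (hx.trans (map_zero (algebraMap K E)).symm) ▸ isSeparable_algebraMap 0
  · exact (Polynomial.separable_X_pow_sub_C y he hy).of_dvd (minpoly.dvd K x (by simp [hx]))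

theorem IsMaximalKummer.isSeparable (h : IsMaximalKummer K E e ζ) (he : (e : K) ≠ 0) :
    Algebra.IsSeparable K E := by
  have hζ : Algebra.IsSeparable K K⟮ζ⟯ := (isSeparable_adjoin_simple_iff_isSeparable K E).2
    (isSeparable_of_pow_eq_algebraMap he (y := 1) (by rw [h.isPrimitiveRoot.pow_eq_one, map_one]))
  have htop : Algebra.IsSeparable K (⊤ : IntermediateField K E) := by
    rw [← h.adjoin_eq_top, isSeparable_adjoin_iff_isSeparable]
    intro x hx
    have : IsSeparable K⟮ζ⟯ x := isSeparable_of_pow_eq_algebraMap (y := ⟨_, hx⟩)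
      (by simpa only [map_natCast] using (map_ne_zero (algebraMap K K⟮ζ⟯)).2 he) rfl
    exact this.of_algebra_isSeparable_of_isSeparable K
  exact .of_algHom K _ topEquiv.symm.toAlgHom

theorem adjoin_simple_eq_of_isPrimitiveRoot [NeZero e] {ξ : E} (hζ : IsPrimitiveRoot ζ e)
    (hξ : IsPrimitiveRoot ξ e) : K⟮ζ⟯ = K⟮ξ⟯ := by
  have hle {a b : E} (ha : IsPrimitiveRoot a e) (hb : IsPrimitiveRoot b e) : K⟮a⟯ ≤ K⟮b⟯ := by
    obtain ⟨i, -, rfl⟩ := hb.eq_pow_of_pow_eq_one ha.pow_eq_one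
    exact adjoin_simple_le_iff.2 (pow_mem (mem_adjoin_simple_self K b) i)
  exact le_antisymm (hle hζ hξ) (hle hξ hζ)

theorem IsMaximalKummer.fieldRange_eq [NeZero e] (h : IsMaximalKummer K E e ζ) {Ω : Type*} [Field Ω]
    [Algebra K Ω] (ψ : E →ₐ[K] Ω) {ξ : Ω} (hξ : IsPrimitiveRoot ξ e) :
    ψ.fieldRange = K⟮ξ⟯ ⊔ adjoin K {x | x ^ e ∈ K⟮ξ⟯} := by
  have hmap : K⟮ζ⟯.map ψ = K⟮ξ⟯ := by
    rw [adjoin_map, Set.image_singleton]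
    exact adjoin_simple_eq_of_isPrimitiveRoot (h.isPrimitiveRoot.map_of_injective ψ.injective) hξ
  have himage : ψ '' {x | x ^ e ∈ K⟮ζ⟯} = {x | x ^ e ∈ K⟮ξ⟯} := by
    ext x
    constructor
    · rintro ⟨x, hx, rfl⟩
      exact hmap ▸ ⟨_, hx, map_pow ψ x e⟩
    · intro hx
      obtain ⟨y, hy, hyx⟩ := hmap.ge hx
      obtain ⟨z, rfl⟩ := h.exists_pow_eq y hy
      obtain rfl | hz := eq_or_ne z 0
      · refine ⟨0, hy, ?_⟩
        have : x ^ e = 0 := by simpa [NeZero.ne e] using hyx.symm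
        rw [map_zero, eq_zero_of_pow_eq_zero this]
      have hroot : (x / ψ z) ^ e = 1 := by
        rw [div_pow, ← hyx]
        simp [hz]
      obtain ⟨i, -, hi⟩ :=
        (h.isPrimitiveRoot.map_of_injective ψ.injective).eq_pow_of_pow_eq_one hroot
      refine ⟨ζ ^ i * z, ?_, ?_⟩
      · rw [Set.mem_ofPred, mul_pow, pow_right_comm, h.isPrimitiveRoot.pow_eq_one, one_pow, one_mul]
        exact hy
      · rw [map_mul, map_pow, ← eq_div_iff (by simpa using hz)]
        exact hi
  rw [AlgHom.fieldRange_eq_map, ← h.adjoin_eq_top, adjoin_map, himage]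
  refine (sup_eq_right.2 (adjoin_simple_le_iff.2 (subset_adjoin _ _ ?_))).symm
  rw [Set.mem_ofPred, hξ.pow_eq_one]
  exact one_mem _

theorem IsMaximalKummer.nonempty_algEquiv (h : IsMaximalKummer K E e ζ) (he : (e : K) ≠ 0)
    {Ω : Type*} [Field Ω] [Algebra K Ω] [IsSepClosed Ω] {ξ : Ω} (hξ : IsPrimitiveRoot ξ e) :
    Nonempty (↥(K⟮ξ⟯ ⊔ adjoin K {x | x ^ e ∈ K⟮ξ⟯}) ≃ₐ[K] E) := by
  have : NeZero e := ⟨by rintro rfl; simp at he⟩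
  have := h.isSeparable he
  let ψ : E →ₐ[K] Ω := IsSepClosed.lift
  rw [← h.fieldRange_eq ψ hξ]
  exact ⟨(AlgEquiv.ofInjectiveField ψ).symm⟩

theorem isMaximalKummer_of_eq_adjoin [NeZero e] {A : Type*} [Field A] [Algebra K A] [IsAlgClosed A]
    {F : IntermediateField K A} {ζ : F} (hζ : IsPrimitiveRoot ζ e)
    (hF : F = adjoin K {x : A | x ^ e ∈ K⟮(ζ : A)⟯}) : IsMaximalKummer K F e ζ := by
  have hmem (x : F) : x ∈ K⟮ζ⟯ ↔ (x : A) ∈ K⟮(ζ : A)⟯ := by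
    rw [← mem_lift, lift_adjoin_simple]
  have hradical {x : A} (hx : x ^ e ∈ K⟮(ζ : A)⟯) : x ∈ F := hF ▸ subset_adjoin _ _ hx
  refine ⟨hζ, fun y hy ↦ ?_, lift_injective F ?_⟩
  · obtain ⟨x, hx⟩ := IsAlgClosed.exists_pow_nat_eq (y : A) (NeZero.pos e)
    exact ⟨⟨x, hradical (hx ▸ (hmem y).1 hy)⟩, Subtype.ext hx⟩
  · rw [lift_adjoin, lift_top]
    refine Eq.trans (congrArg _ (Set.ext fun x ↦ ?_)) hF.symm
    constructor
    · rintro ⟨x, hx, rfl⟩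
      exact (hmem _).1 hx
    · exact fun hx ↦ ⟨⟨x, hradical hx⟩, (hmem _).2 hx, rfl⟩

theorem finite_setOf_pow_mem {R : Type*} [CommRing R] [IsDomain R] {n : ℕ} (hn : n ≠ 0)
    {S : Set R} (hS : S.Finite) : {x | x ^ n ∈ S}.Finite := by
  classical
  refine hS.preimage' (f := (· ^ n)) fun b _ ↦
    (Polynomial.nthRoots n b).toFinset.finite_toSet.subset ?_
  intro x hx
  simpa [Polynomial.mem_nthRoots hn.bot_lt] using hx

theorem exists_isMaximalKummer_of_finite (k : Type*) [Field k] [Finite k] {e : ℕ}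
    (he : (e : k) ≠ 0) :
    ∃ (F : IntermediateField k (AlgebraicClosure k)) (ζ : F),
      FiniteDimensional k F ∧ IsMaximalKummer k F e ζ := by
  have : NeZero (e : k) := ⟨he⟩
  have : NeZero e := .of_neZero_natCast k
  obtain ⟨ζ, hζ⟩ := HasEnoughRootsOfUnity.exists_primitiveRoot (AlgebraicClosure k) e
  have : FiniteDimensional k k⟮ζ⟯ := adjoin.finiteDimensional (Algebra.IsIntegral.isIntegral ζ)
  have : Finite k⟮ζ⟯ := Module.finite_of_finite k
  have : Finite {x | x ^ e ∈ k⟮ζ⟯} :=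
    finite_setOf_pow_mem (NeZero.ne e) (Set.toFinite (k⟮ζ⟯ : Set (AlgebraicClosure k)))
  refine ⟨adjoin k {x | x ^ e ∈ k⟮ζ⟯}, ⟨ζ, subset_adjoin _ _ ?_⟩,
    finiteDimensional_adjoin fun x _ ↦ Algebra.IsIntegral.isIntegral x,
    isMaximalKummer_of_eq_adjoin (hζ.of_map_of_injective (f := (adjoin k {x | x ^ e ∈ k⟮ζ⟯}).val)
      Subtype.val_injective) rfl⟩
  rw [Set.mem_ofPred, hζ.pow_eq_one]
  exact one_mem _

theorem exists_eq_single_mul_pow {R : Type*} [Field R] {e : ℕ} (he : (e : R) ≠ 0)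
    (x : LaurentSeries R) : ∃ (n : ℤ) (a : R) (w : LaurentSeries R), x = single n a * w ^ e := by
  obtain rfl | hx := eq_or_ne x 0
  · exact ⟨0, 0, 0, by simp⟩
  set a := x.coeff x.order with ha
  have ha₀ : a ≠ 0 := coeff_order_eq_zero.not.2 hx
  have hmem : PowerSeries.C a⁻¹ * x.powerSeriesPart - 1 ∈
      Ideal.span {(PowerSeries.X : PowerSeries R)} := by
    rw [Ideal.mem_span_singleton, PowerSeries.X_dvd_iff, map_sub, map_mul,
      ← PowerSeries.coeff_zero_eq_constantCoeff_apply x.powerSeriesPart]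
    simp [← ha, ha₀]
  obtain ⟨w, hw⟩ := exists_pow_eq_of_sub_one_mem (n := e)
    (by simpa only [map_natCast] using (IsUnit.mk0 _ he).map (PowerSeries.C (R := R))) hmem
  refine ⟨x.order, a, ofPowerSeries ℤ R w, ?_⟩
  rw [← map_pow, hw, map_mul, ofPowerSeries_C, C_apply, ← mul_assoc, single_mul_single, add_zero,
    mul_inv_cancel₀ ha₀, LaurentSeries.single_order_mul_powerSeriesPart]

theorem map_mem_adjoin_image {k F K E : Type*} [Field k] [Field F] [Field K] [Field E]
    [Algebra k F] [Algebra K E] (φ : F →+* E)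
    (hφ : (φ.comp (algebraMap k F)).range ≤ (algebraMap K E).range) {S : Set F} {a : F}
    (ha : a ∈ adjoin k S) : φ a ∈ adjoin K (φ '' S) := by
  induction ha using adjoin_induction with
  | mem a ha => exact subset_adjoin _ _ ⟨a, ha, rfl⟩
  | algebraMap c =>
    obtain ⟨d, hd⟩ := hφ ⟨c, rfl⟩
    exact hd ▸ IntermediateField.algebraMap_mem _ d
  | add a b _ _ ha hb => exact map_add φ a b ▸ add_mem ha hb
  | inv a _ ha => exact map_inv₀ φ a ▸ inv_mem ha
  | mul a b _ _ ha hb => exact map_mul φ a b ▸ mul_mem ha hb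

variable {k F K : Type*} [Field k] [Field F] [Algebra k F] [Field K]
  [Algebra K (LaurentSeries F)] {e : ℕ} [NeZero e]

theorem range_C_comp_algebraMap_le
    (hK : (algebraMap K (LaurentSeries F)).range = (laurentExpand (algebraMap k F) e).range) :
    ((C : F →+* LaurentSeries F).comp (algebraMap k F)).range ≤
      (algebraMap K (LaurentSeries F)).range := by
  rintro _ ⟨c, rfl⟩
  exact hK ▸ ⟨C c, by simp [C_apply]⟩

theorem adjoin_simple_C_le_fieldRange_laurentExpand
    (hK : (algebraMap K (LaurentSeries F)).range = (laurentExpand (algebraMap k F) e).range)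
    (ζ : F) : K⟮(C ζ : LaurentSeries F)⟯.toSubfield ≤
      (laurentExpand (algebraMap k⟮ζ⟯ F) e).fieldRange := by
  rw [adjoin_toSubfield, Subfield.closure_le, Set.union_subset_iff, Set.singleton_subset_iff]
  constructor
  · rintro _ ⟨c, rfl⟩
    obtain ⟨x, hx⟩ := hK.le ⟨c, rfl⟩
    refine ⟨laurentTwist (algebraMap k k⟮ζ⟯) 1 x, ?_⟩
    rw [laurentExpand_laurentTwist, ← IsScalarTower.algebraMap_eq, hx]
  · exact ⟨C (AdjoinSimple.gen k ζ), by simp [C_apply]⟩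

theorem IsMaximalKummer.laurentSeries [FiniteDimensional k F] {ζ : F}
    (h : IsMaximalKummer k F e ζ) (he : (e : k) ≠ 0)
    (hK : (algebraMap K (LaurentSeries F)).range = (laurentExpand (algebraMap k F) e).range) :
    IsMaximalKummer K (LaurentSeries F) e (C ζ) := by
  refine ⟨h.isPrimitiveRoot.map_of_injective C_injective, fun z hz ↦ ?_, ?_⟩
  · obtain ⟨y, rfl⟩ := adjoin_simple_C_le_fieldRange_laurentExpand hK ζ hz
    obtain ⟨n, a, w, rfl⟩ := exists_eq_single_mul_pow (R := k⟮ζ⟯)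
      (by simpa only [map_natCast] using (map_ne_zero (algebraMap k k⟮ζ⟯)).2 he) y
    obtain ⟨b, hb⟩ := h.exists_pow_eq a a.2
    refine ⟨single n b * laurentExpand (algebraMap k⟮ζ⟯ F) e w, ?_⟩
    rw [mul_pow, single_pow, hb, nsmul_eq_mul, map_mul, map_pow, laurentExpand_single]
    rfl
  · have hrange := range_C_comp_algebraMap_le hK
    refine toSubalgebra_injective <| top_le_iff.1 <|
      (adjoin_insert_single_range_C_eq_top hK).ge.trans <| Algebra.adjoin_le ?_
    rintro _ (rfl | ⟨a, rfl⟩)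
    · obtain ⟨c, hc⟩ := hK.ge ⟨single 1 1, rfl⟩
      refine subset_adjoin _ _ ?_
      rw [Set.mem_ofPred]
      convert IntermediateField.algebraMap_mem _ c
      rw [hc]
      simp [single_pow]
    · have ha : a ∈ adjoin k {x | x ^ e ∈ k⟮ζ⟯} := by
        rw [h.adjoin_eq_top]
        exact mem_top
      refine adjoin.mono K _ _ ?_ (map_mem_adjoin_image (C : F →+* LaurentSeries F) hrange ha)
      rintro _ ⟨b, hb, rfl⟩
      have hCb := map_mem_adjoin_image (C : F →+* LaurentSeries F) hrange hb
      rwa [Set.image_singleton, map_pow] at hCb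

theorem exists_ringEquiv_laurentSeries_tameAction {k : Type*} [Field k] [Finite k] {e : ℕ}
    (he : (e : k) ≠ 0) {K Ω : Type*} [Field K] (θ : K ≃+* LaurentSeries k) [Field Ω] [Algebra K Ω]
    [IsSepClosed Ω] {ζ : Ω} (hζ : IsPrimitiveRoot ζ e) {L : IntermediateField K Ω}
    (hL : L = K⟮ζ⟯ ⊔ adjoin K {x | x ^ e ∈ K⟮ζ⟯}) :
    ∃ (F : IntermediateField k (AlgebraicClosure k)) (ξ : F) (Φ : L ≃+* LaurentSeries F)
      (Θ : Gal(L/K) ≃* TameGroup k F e), FiniteDimensional k F ∧ IsPrimitiveRoot ξ e ∧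
        ∀ σ x, Φ (σ x) = tameAction k F e (Θ σ) (Φ x) := by
  subst hL
  obtain ⟨F, ξ, _, hξ⟩ := exists_isMaximalKummer_of_finite k he
  have : NeZero e := ⟨by rintro rfl; simp at he⟩
  let := ((laurentExpand (algebraMap k F) e).comp θ.toRingHom).toAlgebra
  have hK : (algebraMap K (LaurentSeries F)).range = (laurentExpand (algebraMap k F) e).range :=
    SetLike.coe_injective (θ.surjective.range_comp (laurentExpand (algebraMap k F) e))
  have heK : (e : K) ≠ 0 := by
    rw [← map_ne_zero (algebraMap K (LaurentSeries F)), map_natCast,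
      ← map_natCast (laurentExpand (algebraMap k F) e), ← map_natCast (C : k →+* LaurentSeries k)]
    simpa only [map_ne_zero] using he
  have : Finite F := Module.finite_of_finite k
  obtain ⟨Φ⟩ := (hξ.laurentSeries he hK).nonempty_algEquiv heK hζ
  let Θ := tameGalEquiv hξ.isPrimitiveRoot hK
  refine ⟨F, ξ, Φ, Φ.autCongr.trans Θ.symm, inferInstance, hξ.isPrimitiveRoot, fun σ x ↦ ?_⟩
  rw [← tameGalEquiv_apply hξ.isPrimitiveRoot hK, MulEquiv.trans_apply, Θ.apply_symm_apply]
  simp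

theorem stmt_19_general {p e : ℕ} [Fact p.Prime] (hpe : p.Coprime e) {k K Ω : Type*} [Field k]
    [Finite k] [CharP k p] [Field K] (θ : K ≃+* LaurentSeries k) [Field Ω] [Algebra K Ω]
    [IsSepClosed Ω] {ζ : Ω} (hζ : IsPrimitiveRoot ζ e) {L : IntermediateField K Ω}
    (hL : L = K⟮ζ⟯ ⊔ adjoin K {x | x ^ e ∈ K⟮ζ⟯}) {W : AddSubgroup L}
    (hW : W = AddSubgroup.closure (Set.range fun x : L ↦ x ^ p - x)) :
    ∃ E : (L ⧸ W) ≃+ (ZMod p × (ℕ →₀ MonoidAlgebra (ZMod p) Gal(L/K))),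
      ∀ (σ : Gal(L/K)) (x : L),
        (E (QuotientAddGroup.mk (σ x))).1 = (E (QuotientAddGroup.mk x)).1 ∧
        ∀ i, (E (QuotientAddGroup.mk (σ x))).2 i =
          MonoidAlgebra.single σ 1 * (E (QuotientAddGroup.mk x)).2 i := by
  have hp : p.Prime := Fact.out
  have he : (e : k) ≠ 0 := by
    rwa [Ne, CharP.cast_eq_zero_iff k p, ← hp.coprime_iff_not_dvd]
  have : NeZero (e : k) := ⟨he⟩
  have : NeZero e := .of_neZero_natCast k
  obtain ⟨F, ξ, Φ, Θ, _, hξ, hΦ⟩ := exists_ringEquiv_laurentSeries_tameAction he θ hζ hL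
  have : Finite F := Module.finite_of_finite k
  have : CharP F p := charP_of_injective_algebraMap (algebraMap k F).injective p
  have : CharP L p := charP_of_injective_ringHom (f := Φ.symm.toRingHom) Φ.symm.injective p
  obtain ⟨E, hE⟩ := exists_addEquiv_quotient_artinSchreier_tameAction hpe hξ Θ
  have hW_map : W.map (Φ : L →+ LaurentSeries F) = (artinSchreier (LaurentSeries F) p).range := by
    have hrange : W = (artinSchreier L p).range :=
      hW.trans (AddSubgroup.closure_eq (artinSchreier L p).range)
    rw [hrange, map_range_artinSchreier]
  refine ⟨(QuotientAddGroup.congr W _ Φ.toAddEquiv hW_map).trans E, fun σ x ↦ ?_⟩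
  have := hE σ (Φ x)
  rwa [← hΦ] at this

end MaximalKummer

/-- Let `K = 𝔽_q((t))` with `q = p ^ f` (formalised as a field isomorphic, as a ring, to
the field of formal Laurent series over the Galois field with `p ^ f` elements), `Ω` a
separable closure of `K`, and `L_n`, `G_n` as usual.  Writing `℘(x) = x ^ p - x`, there
is an isomorphism of `𝔽_p[G_n]`-modules `L_n / ℘(L_n) ≃ 𝔽_p ⊕ 𝔽_p[G_n]^{(ℕ)}`: an
isomorphism of additive groups commuting with the `G_n`-actions — the Galois action on
the left, and on the right the trivial action on `𝔽_p` together with left multiplication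
on each copy of the group algebra `𝔽_p[G_n]` in the countable direct sum. -/
theorem stmt_19 (p f : ℕ) [hp : Fact p.Prime] (hf : 1 ≤ f)
    (K : Type) [Field K] (hK : Nonempty (K ≃+* LaurentSeries (GaloisField p f)))
    (Ω : Type) [Field Ω] [Algebra K Ω] [IsSepClosure K Ω]
    (n : ℕ) (hn : 1 ≤ n)
    (ζ : Ω) (hζ : IsPrimitiveRoot ζ (p ^ n - 1))
    (Kn : IntermediateField K Ω) (hKn : Kn = IntermediateField.adjoin K {ζ})
    (Ln : IntermediateField K Ω)
    (hLn : Ln = Kn ⊔ IntermediateField.adjoin K {x : Ω | x ^ (p ^ n - 1) ∈ Kn})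
    (W : AddSubgroup ↥Ln)
    (hW : W = AddSubgroup.closure (Set.range fun x : ↥Ln => x ^ p - x)) :
    ∃ e : (↥Ln ⧸ W) ≃+ (ZMod p × (ℕ →₀ MonoidAlgebra (ZMod p) (↥Ln ≃ₐ[K] ↥Ln))),
      ∀ (σ : ↥Ln ≃ₐ[K] ↥Ln) (x : ↥Ln),
        (e (QuotientAddGroup.mk (σ x))).1 = (e (QuotientAddGroup.mk x)).1 ∧
        ∀ i : ℕ,
          (e (QuotientAddGroup.mk (σ x))).2 i =
            MonoidAlgebra.single σ (1 : ZMod p) * (e (QuotientAddGroup.mk x)).2 i := by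
  have : IsSepClosed Ω := IsSepClosure.sep_closed K
  have hpe : p.Coprime (p ^ n - 1) := by
    rw [← Nat.coprime_pow_left_iff hn, Nat.coprime_self_sub_right (Nat.pow_pos hp.out.pos)]
    exact Nat.coprime_one_right _
  exact stmt_19_general hpe hK.some hζ (hKn ▸ hLn) hW
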